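/- arXiv:1910.02434 — 2 statements merged into one kernel-verified Lean document; each statement's English description precedes it below -/
import Mathlib

section
/- Let d ≥ 2 and let η be a filter in C^κ(R₊) with 1 ≤ κ < ∞ such that η is constant on [0,a] for some 0 < a < 2. Then the filtered kernel satisfies |K_n(cos θ)| ≤ c·n^d/(1 + nθ)^κ for all θ ∈ [0,π] and all n ≥ 1, where c is a constant depending only on d, η and κ. -/
/-!
Write `P_l` for the normalized Gegenbauer polynomials, `Z_l` for the dimensions of the spaces of
harmonics, `f_l = η (l / n)` and `t = cos θ`. The kernel is, up to the factor `1 / |S^d|`, the sum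
`∑ f_l Z_l P_l(t)`, and it is estimated by summation by parts based on the three-term recurrence.

*Multiplication by `1 - t`.* With `w_l = (l + d - 1).choose l` one has `Z_l = w_l + w_{l-1}`, and
the recurrence becomes the discrete Green formula
`(1 - t) ∑ f_l Z_l P_l = ∑ w_l (f_l - f_{l+1}) (P_l - P_{l+1}) = ∑ (T f)_l Z_l P_l`
(`one_sub_mul_sum`, `sum_coefOp`). Here `T = coefOp d` is minus half the second difference plus a
first difference weighted by a multiple of `1 / (2l + d - 1)`. Since `η` vanishes near `0`, only
indices `l ≳ n` matter, and there each application of `T` costs two derivatives of `η` and gains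
`n⁻²` (`DiffBound.coefOp_iterate`).

*Bounds for `P_l`.* The quantity `(P_{l+1} - t P_l)² + (1 - t²) P_l²` does not increase with `l`
(`normGegenbauer_energy`). Hence `|P_l| ≤ 1` and `|P_l - P_{l+1}| ≤ 2 θ`, uniformly in `l`.

*Conclusion.* As `1 - cos θ ≥ 2 θ² / π²` on `[0, π]`, for `κ = 2 m` one multiplies the kernel by
`(1 - t) ^ m`, uses the last form of the sum, and bounds about `n` terms of size
`n ^ (d - 1 - 2 m)`. For `κ = 2 m + 1` one multiplies by `(1 - t) ^ (m + 1)` and uses the middle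
form in the last step: the coefficients gain one more factor `1 / n`, and the factor `θ` in the
bound for `P_l - P_{l+1}` makes up for the surplus power of `θ` (`exists_tail_bound`). When `n θ`
is bounded, counting terms is enough (`exists_trivial_bound`).
-/

open MeasureTheory ProbabilityTheory Real Filter
open scoped BigOperators ENNReal RealInnerProductSpace

noncomputable section

/-- The unit sphere `S^d ⊂ ℝ^{d+1}`. -/
abbrev UnitSphere (d : ℕ) : Type := Metric.sphere (0 : EuclideanSpace ℝ (Fin (d + 1))) 1

/-- Euclidean inner product of two points on the sphere. -/
def sdot {d : ℕ} (x y : UnitSphere d) : ℝ :=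
  ⟪(x : EuclideanSpace ℝ (Fin (d + 1))), (y : EuclideanSpace ℝ (Fin (d + 1)))⟫

/-- Geodesic distance on the sphere. -/
def geoDist {d : ℕ} (x y : UnitSphere d) : ℝ := Real.arccos (sdot x y)

/-- Surface (Lebesgue) measure on `S^d`: the `d`-dimensional Hausdorff measure. -/
def sphereMeasure (d : ℕ) : Measure (UnitSphere d) := μH[d]

/-- Spherical polynomials of degree at most `n`: restrictions to the sphere of
polynomials on `ℝ^{d+1}` of total degree at most `n`. -/
def sphPoly (d n : ℕ) : Set (UnitSphere d → ℝ) :=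
  {f | ∃ p : MvPolynomial (Fin (d + 1)) ℝ, p.totalDegree ≤ n ∧
    ∀ x : UnitSphere d, f x = MvPolynomial.eval (fun i => (x : EuclideanSpace ℝ (Fin (d + 1))) i) p}

/-- The space of spherical harmonics of degree `ℓ`: restrictions to the sphere of
homogeneous harmonic polynomials of degree `ℓ` on `ℝ^{d+1}`. -/
def sphHarmonic (d ℓ : ℕ) : Set (UnitSphere d → ℝ) :=
  {f | ∃ p : MvPolynomial (Fin (d + 1)) ℝ, p.IsHomogeneous ℓ ∧
    (∑ i : Fin (d + 1), MvPolynomial.pderiv i (MvPolynomial.pderiv i p)) = 0 ∧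
    ∀ x : UnitSphere d, f x = MvPolynomial.eval (fun i => (x : EuclideanSpace ℝ (Fin (d + 1))) i) p}

/-- A filter of smoothness `κ`: `η ∈ C^κ(ℝ₊)`, `supp η ⊆ [1/2,2]`, and
`η(t)² + η(2t)² = 1` on `[1/2,1]`. -/
structure IsFilter (η : ℝ → ℝ) (κ : ℕ) : Prop where
  smooth : ContDiffOn ℝ κ η (Set.Ici 0)
  supp : ∀ t : ℝ, 0 ≤ t → t ∉ Set.Icc (1/2 : ℝ) 2 → η t = 0
  partition : ∀ t ∈ Set.Icc (1/2 : ℝ) 1, (η t) ^ 2 + (η (2 * t)) ^ 2 = 1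

/-- Gegenbauer polynomials `C_ℓ^λ` via the three-term recurrence. -/
def gegenbauer (lam : ℝ) : ℕ → Polynomial ℝ
  | 0 => 1
  | 1 => Polynomial.C (2 * lam) * Polynomial.X
  | (n + 2) =>
      Polynomial.C (2 * ((n : ℝ) + 1 + lam) / ((n : ℝ) + 2)) * Polynomial.X *
          gegenbauer lam (n + 1) -
        Polynomial.C (((n : ℝ) + 2 * lam) / ((n : ℝ) + 2)) * gegenbauer lam n

/-- The normalized Gegenbauer polynomial `P_ℓ^{(d+1)}` with `P_ℓ^{(d+1)}(1) = 1`. -/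
def normGegenbauer (d ℓ : ℕ) (t : ℝ) : ℝ :=
  (gegenbauer (((d : ℝ) - 1) / 2) ℓ).eval t / (gegenbauer (((d : ℝ) - 1) / 2) ℓ).eval 1

/-- `Z_{d,ℓ}`, the dimension of the space of spherical harmonics of degree `ℓ` on `S^d`. -/
def harmDim (d ℓ : ℕ) : ℝ :=
  if ℓ = 0 then 1
  else (2 * (ℓ : ℝ) + d - 1) / ((ℓ : ℝ) + d - 1) * (Nat.choose (ℓ + d - 1) ℓ : ℝ)

/-- The volume `|S^d| = 2 π^{(d+1)/2} / Γ((d+1)/2)`. -/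
def sphereVol (d : ℕ) : ℝ :=
  2 * Real.pi ^ (((d : ℝ) + 1) / 2) / Real.Gamma (((d : ℝ) + 1) / 2)

/-- The filtered kernel `K_n(t) = Σ_ℓ η(ℓ/n) (Z_{d,ℓ}/|S^d|) P_ℓ^{(d+1)}(t)`. -/
def filteredKernel (d : ℕ) (η : ℝ → ℝ) (n : ℕ) (t : ℝ) : ℝ :=
  ∑' ℓ : ℕ, η ((ℓ : ℝ) / (n : ℝ)) * (harmDim d ℓ / sphereVol d) * normGegenbauer d ℓ t

/-- Mesh norm (covering radius) of a finite point configuration on the sphere. -/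
def meshNorm {d : ℕ} {ι : Type*} [Fintype ι] (x : ι → UnitSphere d) : ℝ :=
  ⨆ y : UnitSphere d, ⨅ i : ι, geoDist y (x i)

/-- Separation radius of a finite point configuration on the sphere. -/
def sepRadius {d : ℕ} {ι : Type*} [Fintype ι] (x : ι → UnitSphere d) : ℝ :=
  (1 / 2) * ⨅ p : {q : ι × ι // q.1 ≠ q.2}, geoDist (x p.val.1) (x p.val.2)

/-- Mesh ratio `ρ = h/δ ≥ 1`. -/
def meshRatio {d : ℕ} {ι : Type*} [Fintype ι] (x : ι → UnitSphere d) : ℝ :=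
  meshNorm x / sepRadius x

/-- `g` is a spherical-harmonic decomposition of `f` witnessing membership of the
Sobolev space `W₂^r(S^d)`. -/
structure SobolevData (d : ℕ) (r : ℝ) (f : UnitSphere d → ℝ) (g : ℕ → UnitSphere d → ℝ) :
    Prop where
  harmonic : ∀ ℓ, g ℓ ∈ sphHarmonic d ℓ
  hasSum : ∀ x, HasSum (fun ℓ => g ℓ x) (f x)
  summable : Summable (fun ℓ : ℕ =>
    (1 + (ℓ : ℝ) * ((ℓ : ℝ) + d - 1)) ^ r * ∫ x, (g ℓ x) ^ 2 ∂(sphereMeasure d))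

/-- The squared Sobolev norm `‖f‖²_{W₂^r}` computed from a harmonic decomposition `g`. -/
def sobNormSq (d : ℕ) (r : ℝ) (g : ℕ → UnitSphere d → ℝ) : ℝ :=
  ∑' ℓ : ℕ, (1 + (ℓ : ℝ) * ((ℓ : ℝ) + d - 1)) ^ r * ∫ x, (g ℓ x) ^ 2 ∂(sphereMeasure d)

end

/-! ### Sequences with bounded differences -/

/-- `Δ f`, the forward difference of a real sequence. -/
noncomputable def fdiff (f : ℕ → ℝ) : ℕ → ℝ := fun l => f (l + 1) - f l

/-- `DiffBound s h k M f`: for every order `i ≤ k`, the `i`-th forward difference of `f` is at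
most `M * h ^ i` in absolute value at all indices `≥ s`. This is the discrete counterpart of a
`C^k` bound for a function sampled with step `h`. -/
def DiffBound (s : ℕ) (h : ℝ) : ℕ → ℝ → (ℕ → ℝ) → Prop
  | 0, M, f => ∀ l, s ≤ l → |f l| ≤ M
  | k + 1, M, f => (∀ l, s ≤ l → |f l| ≤ M) ∧ DiffBound s h k (M * h) (fdiff f)

namespace DiffBound

variable {s k : ℕ} {h M N : ℝ} {f g : ℕ → ℝ}

lemma abs_le (H : DiffBound s h k M f) : ∀ l, s ≤ l → |f l| ≤ M := by
  cases k with
  | zero => exact H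
  | succ k => exact H.1

lemma nonneg (H : DiffBound s h k M f) : 0 ≤ M := (abs_nonneg _).trans (H.abs_le s le_rfl)

lemma congr (hfg : ∀ l, s ≤ l → f l = g l) (H : DiffBound s h k M f) : DiffBound s h k M g := by
  induction k generalizing M f g with
  | zero => intro l hl; rw [← hfg l hl]; exact H l hl
  | succ k ih =>
    refine ⟨fun l hl => by rw [← hfg l hl]; exact H.1 l hl, ih (fun l hl => ?_) H.2⟩
    simp only [fdiff, hfg l hl, hfg (l + 1) (by omega)]

lemma mono (hh : 0 ≤ h) (hMN : M ≤ N) (H : DiffBound s h k M f) : DiffBound s h k N f := by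
  induction k generalizing M N f with
  | zero => exact fun l hl => (H l hl).trans hMN
  | succ k ih =>
    exact ⟨fun l hl => (H.1 l hl).trans hMN, ih (mul_le_mul_of_nonneg_right hMN hh) H.2⟩

lemma mono_start {s' : ℕ} (hs : s ≤ s') (H : DiffBound s h k M f) : DiffBound s' h k M f := by
  induction k generalizing M f with
  | zero => exact fun l hl => H l (hs.trans hl)
  | succ k ih => exact ⟨fun l hl => H.1 l (hs.trans hl), ih H.2⟩

lemma of_succ (H : DiffBound s h (k + 1) M f) : DiffBound s h k M f := by
  induction k generalizing M f with
  | zero => exact H.1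
  | succ k ih => exact ⟨H.1, ih H.2⟩

lemma add (H : DiffBound s h k M f) (H' : DiffBound s h k N g) :
    DiffBound s h k (M + N) (fun l => f l + g l) := by
  induction k generalizing M N f g with
  | zero => exact fun l hl => (abs_add_le _ _).trans (add_le_add (H l hl) (H' l hl))
  | succ k ih =>
    refine ⟨fun l hl => (abs_add_le _ _).trans (add_le_add (H.1 l hl) (H'.1 l hl)), ?_⟩
    rw [add_mul]
    refine (ih H.2 H'.2).congr fun l _ => ?_
    simp only [fdiff]; ring

lemma const_mul (c : ℝ) (H : DiffBound s h k M f) :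
    DiffBound s h k (|c| * M) (fun l => c * f l) := by
  induction k generalizing M f with
  | zero => exact fun l hl => by rw [abs_mul]; exact mul_le_mul_of_nonneg_left (H l hl) (abs_nonneg c)
  | succ k ih =>
    refine ⟨fun l hl => by
      rw [abs_mul]; exact mul_le_mul_of_nonneg_left (H.1 l hl) (abs_nonneg c), ?_⟩
    rw [mul_assoc]
    refine (ih H.2).congr fun l _ => ?_
    simp only [fdiff]; ring

lemma shift (H : DiffBound s h k M f) : DiffBound s h k M (fun l => f (l + 1)) := by
  induction k generalizing M f with
  | zero => exact fun l hl => H _ (by omega)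
  | succ k ih => exact ⟨fun l hl => H.1 _ (by omega), ih H.2⟩

lemma unshift (H : DiffBound s h k M f) : DiffBound (s + 1) h k M (fun l => f (l - 1)) := by
  induction k generalizing M f with
  | zero => exact fun l hl => H _ (by omega)
  | succ k ih =>
    refine ⟨fun l hl => H.1 _ (by omega), (ih H.2).congr fun l hl => ?_⟩
    simp only [fdiff, Nat.sub_add_cancel (show 1 ≤ l by omega), Nat.add_sub_cancel]

/-- Discrete Leibniz rule. -/
lemma mul (H : DiffBound s h k M f) (H' : DiffBound s h k N g) :
    DiffBound s h k (2 ^ k * (M * N)) (fun l => f l * g l) := by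
  induction k generalizing M N f g with
  | zero =>
    intro l hl
    rw [abs_mul, pow_zero, one_mul]
    exact mul_le_mul (H l hl) (H' l hl) (abs_nonneg _) H.nonneg
  | succ k ih =>
    have hMN : 0 ≤ M * N := mul_nonneg H.nonneg H'.nonneg
    refine ⟨fun l hl => ?_, ?_⟩
    · rw [abs_mul]
      exact (mul_le_mul (H.1 l hl) (H'.1 l hl) (abs_nonneg _) H.nonneg).trans
        (le_mul_of_one_le_left hMN (one_le_pow₀ one_le_two))
    · have e : (2 : ℝ) ^ (k + 1) * (M * N) * h
          = 2 ^ k * (M * (N * h)) + 2 ^ k * (M * h * N) := by ring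
      rw [e]
      refine ((ih H.of_succ.shift H'.2).add (ih H.2 H'.of_succ)).congr fun l _ => ?_
      simp only [fdiff]; ring

/-- The weight `1 / (2l + d - 1)` behaves at indices `l ≳ 1/h` like `h` times a smooth function
sampled with step `h`. The induction uses that its difference is `-2` times the product of two
consecutive values. -/
lemma weight (d : ℕ) (hd : 2 ≤ d) (k : ℕ) : ∃ C : ℝ, 0 ≤ C ∧ ∀ (s : ℕ) (h : ℝ), 0 ≤ h →
    1 ≤ h * (4 * s) → DiffBound s h k (C * h) (fun l => 1 / (2 * (l : ℝ) + d - 1)) := by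
  have hd' : (2 : ℝ) ≤ d := by exact_mod_cast hd
  have base : ∀ (s : ℕ) (h : ℝ), 0 ≤ h → 1 ≤ h * (4 * s) → ∀ l : ℕ, s ≤ l →
      |1 / (2 * (l : ℝ) + d - 1)| ≤ 2 * h := by
    intro s h hh hs l hl
    have hl' : (s : ℝ) ≤ l := by exact_mod_cast hl
    have hl0 : (0 : ℝ) ≤ l := Nat.cast_nonneg l
    have hpos : 0 < 2 * (l : ℝ) + d - 1 := by linarith
    rw [abs_of_nonneg (by positivity), div_le_iff₀ hpos]
    nlinarith [mul_le_mul_of_nonneg_left hl' hh]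
  induction k with
  | zero => exact ⟨2, by norm_num, base⟩
  | succ k ih =>
    obtain ⟨C, hC, H⟩ := ih
    refine ⟨2 + 2 * (2 ^ k * C ^ 2), by positivity, fun s h hh hs => ⟨fun l hl => ?_, ?_⟩⟩
    · refine (base s h hh hs l hl).trans (mul_le_mul_of_nonneg_right ?_ hh)
      have : 0 ≤ 2 * (2 ^ k * C ^ 2) := by positivity
      linarith
    · have := ((H s h hh hs).mul (H s h hh hs).shift).const_mul (-2)
      refine (this.mono hh ?_).congr fun l _ => ?_
      · rw [abs_neg, abs_two]
        nlinarith [mul_nonneg hh hh]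
      · have hl0 : (0 : ℝ) ≤ l := Nat.cast_nonneg l
        have h1 : 2 * (l : ℝ) + d - 1 ≠ 0 := by linarith
        have h2 : 2 * ((l : ℝ) + 1) + d - 1 ≠ 0 := by linarith
        simp only [fdiff, Nat.cast_add, Nat.cast_one]
        field_simp
        ring

/-- A function with `k` bounded derivatives, sampled with step `h`. -/
lemma of_contDiff (hh : 0 ≤ h) {φ : ℝ → ℝ} (hφ : ContDiff ℝ k φ)
    (hb : ∀ i ≤ k, ∀ x, |iteratedDeriv i φ x| ≤ M) :
    DiffBound 0 h k M (fun l => φ (l * h)) := by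
  induction k generalizing M φ with
  | zero => exact fun l _ => by simpa using hb 0 le_rfl (l * h)
  | succ k ih =>
    refine ⟨fun l _ => by simpa using hb 0 (by omega) (l * h), ?_⟩
    have hφk : ContDiff ℝ k φ := hφ.of_le (by exact_mod_cast Nat.le_succ k)
    have hsh : ContDiff ℝ k (fun x => φ (x + h)) := hφk.comp (contDiff_id.add contDiff_const)
    have := ih (M := M * h) (hsh.sub hφk) fun i hi x => ?_
    · refine this.congr fun l _ => ?_
      simp only [fdiff]
      push_cast
      congr 2
      ring
    · -- The mean value inequality applied to the `i`-th derivative of `φ`.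
      have e : iteratedDeriv i (fun x => φ (x + h) - φ x) x
          = iteratedDeriv i φ (x + h) - iteratedDeriv i φ x := by
        have h1 : ContDiffAt ℝ i (fun x => φ (x + h)) x :=
          (hsh.of_le (by exact_mod_cast hi)).contDiffAt
        have h2 : ContDiffAt ℝ i φ x := (hφk.of_le (by exact_mod_cast hi)).contDiffAt
        have h3 := iteratedDeriv_sub h1 h2
        have h4 := congrFun (iteratedDeriv_comp_add_const i φ h) x
        rw [← h4]
        exact h3
      have hdiff : Differentiable ℝ (iteratedDeriv i φ) :=
        hφ.differentiable_iteratedDeriv i (by exact_mod_cast Nat.lt_succ_of_le hi)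
      have mv := Convex.norm_image_sub_le_of_norm_deriv_le (f := iteratedDeriv i φ) (C := M)
        (s := Set.univ) (x := x) (y := x + h) (fun y _ => hdiff y)
        (fun y _ => by
          rw [← iteratedDeriv_succ]; exact hb (i + 1) (by omega) y)
        convex_univ (Set.mem_univ _) (Set.mem_univ _)
      rw [add_sub_cancel_left, Real.norm_of_nonneg hh] at mv
      change |iteratedDeriv i (fun x => φ (x + h) - φ x) x| ≤ M * h
      rw [e]
      exact mv

end DiffBound

/-! ### Recurrence and uniform bounds for the normalized Gegenbauer polynomials -/

lemma gegenbauer_one_succ (d : ℕ) (hd : 2 ≤ d) (l : ℕ) :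
    0 < (gegenbauer (((d : ℝ) - 1) / 2) l).eval 1 ∧
    ((l : ℝ) + 1) * (gegenbauer (((d : ℝ) - 1) / 2) (l + 1)).eval 1
      = ((l : ℝ) + d - 1) * (gegenbauer (((d : ℝ) - 1) / 2) l).eval 1 := by
  have hd' : (2 : ℝ) ≤ d := by exact_mod_cast hd
  induction l with
  | zero => simp [gegenbauer]; ring
  | succ l ih =>
    obtain ⟨hp, he⟩ := ih
    have hl0 : (0 : ℝ) ≤ l := Nat.cast_nonneg l
    constructor
    · have : 0 < ((l : ℝ) + 1) * (gegenbauer (((d : ℝ) - 1) / 2) (l + 1)).eval 1 := by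
        rw [he]; exact mul_pos (by linarith) hp
      exact pos_of_mul_pos_right this (by linarith)
    · have h2 : (l : ℝ) + 2 ≠ 0 := by linarith
      simp only [gegenbauer, Polynomial.eval_sub, Polynomial.eval_mul, Polynomial.eval_C,
        Polynomial.eval_X, Nat.cast_add, Nat.cast_one]
      field_simp
      linear_combination ((l : ℝ) + 2) * he

lemma normGegenbauer_zero (d : ℕ) (t : ℝ) : normGegenbauer d 0 t = 1 := by
  simp [normGegenbauer, gegenbauer]

lemma normGegenbauer_one (d : ℕ) (hd : 2 ≤ d) (t : ℝ) : normGegenbauer d 1 t = t := by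
  have hd' : (2 : ℝ) ≤ d := by exact_mod_cast hd
  have : (d : ℝ) - 1 ≠ 0 := by linarith
  simp [normGegenbauer, gegenbauer]
  field_simp

lemma normGegenbauer_rec (d : ℕ) (hd : 2 ≤ d) (l : ℕ) (t : ℝ) :
    ((l : ℝ) + d) * normGegenbauer d (l + 2) t
      = (2 * l + d + 1) * t * normGegenbauer d (l + 1) t - (l + 1) * normGegenbauer d l t := by
  obtain ⟨p0, e0⟩ := gegenbauer_one_succ d hd l
  obtain ⟨p1, e1⟩ := gegenbauer_one_succ d hd (l + 1)
  obtain ⟨p2, -⟩ := gegenbauer_one_succ d hd (l + 2)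
  have hl0 : (0 : ℝ) ≤ l := Nat.cast_nonneg l
  have h2 : (l : ℝ) + 2 ≠ 0 := by linarith
  have hrec : ((l : ℝ) + 2) * (gegenbauer (((d : ℝ) - 1) / 2) (l + 2)).eval t
      = (2 * l + d + 1) * t * (gegenbauer (((d : ℝ) - 1) / 2) (l + 1)).eval t
        - (l + d - 1) * (gegenbauer (((d : ℝ) - 1) / 2) l).eval t := by
    simp only [gegenbauer, Polynomial.eval_sub, Polynomial.eval_mul, Polynomial.eval_C,
        Polynomial.eval_X]
    field_simp
    ring
  have a0 : (gegenbauer (((d : ℝ) - 1) / 2) l).eval t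
      = normGegenbauer d l t * (gegenbauer (((d : ℝ) - 1) / 2) l).eval 1 := by
    rw [normGegenbauer, div_mul_cancel₀ _ p0.ne']
  have a1 : (gegenbauer (((d : ℝ) - 1) / 2) (l + 1)).eval t
      = normGegenbauer d (l + 1) t * (gegenbauer (((d : ℝ) - 1) / 2) (l + 1)).eval 1 := by
    rw [normGegenbauer, div_mul_cancel₀ _ p1.ne']
  have a2 : (gegenbauer (((d : ℝ) - 1) / 2) (l + 2)).eval t
      = normGegenbauer d (l + 2) t * (gegenbauer (((d : ℝ) - 1) / 2) (l + 2)).eval 1 := by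
    rw [normGegenbauer, div_mul_cancel₀ _ p2.ne']
  rw [a0, a1, a2] at hrec
  push_cast at e1
  rw [show l + 1 + 1 = l + 2 from rfl] at e1
  refine mul_right_cancel₀ p1.ne' ?_
  linear_combination hrec - normGegenbauer d (l + 2) t * e1
    + normGegenbauer d l t * e0

/-- The quantity `P_{l+1}² - 2 t P_l P_{l+1} + P_l²` does not increase with `l`, since the
recurrence reads `(l + d) (P_{l+2} - t P_{l+1}) = (l + 1) (t P_{l+1} - P_l)`. -/
lemma normGegenbauer_energy (d : ℕ) (hd : 2 ≤ d) (l : ℕ) (t : ℝ) :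
    (normGegenbauer d (l + 1) t - t * normGegenbauer d l t) ^ 2
      + (1 - t ^ 2) * normGegenbauer d l t ^ 2 ≤ 1 - t ^ 2 := by
  have hd' : (2 : ℝ) ≤ d := by exact_mod_cast hd
  induction l with
  | zero => rw [normGegenbauer_zero, zero_add, normGegenbauer_one d hd]; nlinarith
  | succ l ih =>
    have hr := normGegenbauer_rec d hd l t
    have hl0 : (0 : ℝ) ≤ l := Nat.cast_nonneg l
    rw [show l + 1 + 1 = l + 2 from rfl]
    set P := normGegenbauer d l t
    set Q := normGegenbauer d (l + 1) t
    set R := normGegenbauer d (l + 2) t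
    have hpos : (0 : ℝ) < l + d := by linarith
    have e : R - t * Q = ((l : ℝ) + 1) / (l + d) * (t * Q - P) := by
      field_simp
      linear_combination hr
    have hc : (((l : ℝ) + 1) / (l + d)) ^ 2 ≤ 1 := by
      refine pow_le_one₀ (by positivity) ?_
      rw [div_le_one hpos]; linarith
    have : (R - t * Q) ^ 2 ≤ (t * Q - P) ^ 2 := by
      rw [e, mul_pow]
      exact mul_le_of_le_one_left (sq_nonneg _) hc
    nlinarith

lemma abs_normGegenbauer_le (d : ℕ) (hd : 2 ≤ d) (l : ℕ) (t : ℝ) (ht : t ^ 2 ≤ 1) :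
    |normGegenbauer d l t| ≤ 1 := by
  rcases ht.lt_or_eq with h | h
  · have := normGegenbauer_energy d hd l t
    rw [← sq_le_one_iff_abs_le_one]
    have h0 : 0 < 1 - t ^ 2 := by linarith
    have h1 : (1 - t ^ 2) * normGegenbauer d l t ^ 2 ≤ (1 - t ^ 2) * 1 := by
      nlinarith [sq_nonneg (normGegenbauer d (l + 1) t - t * normGegenbauer d l t)]
    exact le_of_mul_le_mul_left h1 h0
  · -- At `t = ±1` the energy vanishes, so `P_{l+1} = t P_l`.
    rw [← sq_le_one_iff_abs_le_one]
    induction l with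
    | zero => rw [normGegenbauer_zero]; norm_num
    | succ l ih =>
      have := normGegenbauer_energy d hd l t
      rw [h] at this
      have h0 : normGegenbauer d (l + 1) t - t * normGegenbauer d l t = 0 := by
        have : (normGegenbauer d (l + 1) t - t * normGegenbauer d l t) ^ 2 ≤ 0 := by linarith
        exact pow_eq_zero_iff two_ne_zero |>.1 (le_antisymm this (sq_nonneg _))
      rw [sub_eq_zero.1 h0, mul_pow, h, one_mul]
      exact ih

lemma abs_normGegenbauer_sub_le (d : ℕ) (hd : 2 ≤ d) (l : ℕ) (θ : ℝ) (hθ : 0 ≤ θ) :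
    |normGegenbauer d l (cos θ) - normGegenbauer d (l + 1) (cos θ)| ≤ 2 * θ := by
  have h1 := abs_normGegenbauer_le d hd l (cos θ) (cos_sq_le_one θ)
  have h2 : |normGegenbauer d (l + 1) (cos θ) - cos θ * normGegenbauer d l (cos θ)| ≤ θ := by
    have he := normGegenbauer_energy d hd l (cos θ)
    have hs : 1 - cos θ ^ 2 = sin θ ^ 2 := by rw [sin_sq]
    rw [hs] at he
    have : (normGegenbauer d (l + 1) (cos θ) - cos θ * normGegenbauer d l (cos θ)) ^ 2
        ≤ sin θ ^ 2 := by
      nlinarith [mul_nonneg (sq_nonneg (sin θ)) (sq_nonneg (normGegenbauer d l (cos θ)))]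
    refine (sq_le_sq.1 this).trans ((abs_sin_le_abs (x := θ)).trans (abs_of_nonneg hθ).le)
  have h3 : 1 - cos θ ≤ θ := by
    rcases le_total θ 2 with h | h
    · nlinarith [one_sub_sq_div_two_le_cos (x := θ)]
    · linarith [neg_one_le_cos θ]
  have h4 : |(1 - cos θ) * normGegenbauer d l (cos θ)| ≤ θ := by
    rw [abs_mul, abs_of_nonneg (by linarith [cos_le_one θ])]
    nlinarith [abs_nonneg (normGegenbauer d l (cos θ)), cos_le_one θ]
  calc _ = |(1 - cos θ) * normGegenbauer d l (cos θ)
        - (normGegenbauer d (l + 1) (cos θ) - cos θ * normGegenbauer d l (cos θ))| := by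
          congr 1; ring
    _ ≤ _ := by
      refine (abs_sub _ _).trans ?_
      linarith

/-! ### Multiplication by `1 - t` on coefficient sequences -/

/-- `w_l`, the dimension of the homogeneous polynomials of degree `l` in `d` variables. These are
the edge weights of the three-term recurrence: `Z_{d,l} = w_l + w_{l-1}`. -/
noncomputable def edgeW (d l : ℕ) : ℝ := (Nat.choose (l + d - 1) l : ℝ)

/-- The operator on coefficient sequences dual to multiplication by `1 - t` in the basis
`Z_{d,l} P_l`. At `l = 0` the truncated index `l - 1` has coefficient zero. -/
noncomputable def coefOp (d : ℕ) (f : ℕ → ℝ) : ℕ → ℝ := fun l =>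
  ((l : ℝ) + d - 1) / (2 * l + d - 1) * (f l - f (l + 1))
    + (l : ℝ) / (2 * l + d - 1) * (f l - f (l - 1))

lemma edgeW_zero (d : ℕ) : edgeW d 0 = 1 := by simp [edgeW]

lemma edgeW_nonneg (d l : ℕ) : 0 ≤ edgeW d l := Nat.cast_nonneg _

lemma edgeW_succ (d : ℕ) (hd : 2 ≤ d) (l : ℕ) :
    ((l : ℝ) + 1) * edgeW d (l + 1) = (l + d) * edgeW d l := by
  have := Nat.add_one_mul_choose_eq (l + d - 1) l
  rw [show l + d - 1 + 1 = l + 1 + d - 1 by omega] at this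
  have h2 : ((l + 1 + d - 1 : ℕ) : ℝ) = l + d := by
    rw [show l + 1 + d - 1 = l + d by omega]; push_cast; rfl
  have h3 : ((l + 1 + d - 1 : ℕ) : ℝ) * ((l + d - 1).choose l : ℝ)
      = ((l + 1 + d - 1).choose (l + 1) : ℝ) * ((l : ℝ) + 1) := by exact_mod_cast this
  rw [h2] at h3
  simp only [edgeW]
  linarith

lemma harmDim_zero (d : ℕ) : harmDim d 0 = 1 := by simp [harmDim]

lemma harmDim_succ (d l : ℕ) :
    harmDim d (l + 1) = (2 * l + d + 1) / (l + d) * edgeW d (l + 1) := by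
  simp only [harmDim, edgeW, Nat.succ_ne_zero, if_false]
  push_cast
  congr 2 <;> ring

lemma harmDim_succ_eq_add (d : ℕ) (hd : 2 ≤ d) (l : ℕ) :
    harmDim d (l + 1) = edgeW d (l + 1) + edgeW d l := by
  have hd' : (2 : ℝ) ≤ d := by exact_mod_cast hd
  have hl0 : (0 : ℝ) ≤ l := Nat.cast_nonneg l
  have hpos : (l : ℝ) + d ≠ 0 := by linarith
  rw [harmDim_succ]
  field_simp
  linear_combination edgeW_succ d hd l

lemma one_sub_mul_harmDim (d : ℕ) (hd : 2 ≤ d) (l : ℕ) (t : ℝ) :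
    (1 - t) * (harmDim d (l + 1) * normGegenbauer d (l + 1) t)
      = edgeW d (l + 1) * (normGegenbauer d (l + 1) t - normGegenbauer d (l + 2) t)
        + edgeW d l * (normGegenbauer d (l + 1) t - normGegenbauer d l t) := by
  have hd' : (2 : ℝ) ≤ d := by exact_mod_cast hd
  have hl0 : (0 : ℝ) ≤ l := Nat.cast_nonneg l
  have hpos : (l : ℝ) + d ≠ 0 := by linarith
  have hr := normGegenbauer_rec d hd l t
  have hw := edgeW_succ d hd l
  have e1 := harmDim_succ_eq_add d hd l
  have e2 := harmDim_succ d l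
  have e3 : t * harmDim d (l + 1) * normGegenbauer d (l + 1) t
      = edgeW d (l + 1) * normGegenbauer d (l + 2) t + edgeW d l * normGegenbauer d l t := by
    rw [e2]
    field_simp
    linear_combination (-edgeW d (l + 1)) * hr + normGegenbauer d l t * hw
  linear_combination normGegenbauer d (l + 1) t * e1 - e3

lemma coefOp_zero (d : ℕ) (hd : 2 ≤ d) (f : ℕ → ℝ) : coefOp d f 0 = f 0 - f 1 := by
  have hd' : (2 : ℝ) ≤ d := by exact_mod_cast hd
  have : (d : ℝ) - 1 ≠ 0 := by linarith
  simp [coefOp, this]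

lemma harmDim_mul_coefOp (d : ℕ) (hd : 2 ≤ d) (f : ℕ → ℝ) (l : ℕ) :
    harmDim d (l + 1) * coefOp d f (l + 1)
      = edgeW d (l + 1) * (f (l + 1) - f (l + 2)) + edgeW d l * (f (l + 1) - f l) := by
  have hd' : (2 : ℝ) ≤ d := by exact_mod_cast hd
  have hl0 : (0 : ℝ) ≤ l := Nat.cast_nonneg l
  have hpos : (l : ℝ) + d ≠ 0 := by linarith
  have hpos2 : 2 * (l : ℝ) + d + 1 ≠ 0 := by linarith
  have hw : edgeW d l = ((l : ℝ) + 1) / (l + d) * edgeW d (l + 1) := by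
    field_simp
    linear_combination - edgeW_succ d hd l
  rw [harmDim_succ, coefOp, hw]
  simp only [Nat.add_sub_cancel]
  push_cast
  rw [show 2 * ((l : ℝ) + 1) + d - 1 = 2 * l + d + 1 by ring,
    show (l : ℝ) + 1 + d - 1 = l + d by ring, show l + 1 + 1 = l + 2 from rfl]
  field_simp

/-- Discrete Green formula: multiplication by `1 - t` turns `∑ f_l Z_l P_l` into a Dirichlet
form in `f` and `P`. -/
lemma one_sub_mul_sum (d : ℕ) (hd : 2 ≤ d) (f : ℕ → ℝ) (t : ℝ) (L : ℕ) :
    (1 - t) * ∑ l ∈ Finset.range (L + 1), f l * (harmDim d l * normGegenbauer d l t)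
      = ∑ l ∈ Finset.range L, edgeW d l * (f l - f (l + 1))
          * (normGegenbauer d l t - normGegenbauer d (l + 1) t)
        + edgeW d L * f L * (normGegenbauer d L t - normGegenbauer d (L + 1) t) := by
  induction L with
  | zero =>
    simp [harmDim_zero, normGegenbauer_zero, normGegenbauer_one d hd, edgeW_zero]
    ring
  | succ L ih =>
    rw [Finset.sum_range_succ, mul_add, ih, Finset.sum_range_succ]
    linear_combination f (L + 1) * one_sub_mul_harmDim d hd L t

lemma sum_coefOp (d : ℕ) (hd : 2 ≤ d) (f : ℕ → ℝ) (t : ℝ) (L : ℕ) :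
    ∑ l ∈ Finset.range (L + 1), coefOp d f l * (harmDim d l * normGegenbauer d l t)
      = ∑ l ∈ Finset.range L, edgeW d l * (f l - f (l + 1))
          * (normGegenbauer d l t - normGegenbauer d (l + 1) t)
        + edgeW d L * (f L - f (L + 1)) * normGegenbauer d L t := by
  induction L with
  | zero =>
    simp [harmDim_zero, normGegenbauer_zero, edgeW_zero, coefOp_zero d hd]
  | succ L ih =>
    rw [Finset.sum_range_succ, ih, Finset.sum_range_succ]
    linear_combination normGegenbauer d (L + 1) t * harmDim_mul_coefOp d hd f L

/-! ### Iterates of the coefficient operator -/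

/-- Discrete counterpart of the loss of two derivatives and gain of `h ^ 2`. -/
lemma DiffBound.coefOp (d : ℕ) (hd : 2 ≤ d) (k : ℕ) : ∃ C : ℝ, 0 ≤ C ∧
    ∀ (s : ℕ) (h M : ℝ) (f : ℕ → ℝ), 0 ≤ h → 1 ≤ h * (4 * s) → DiffBound s h (k + 2) M f →
      DiffBound (s + 1) h k (C * M * h ^ 2) (coefOp d f) := by
  obtain ⟨C, hC, hg⟩ := DiffBound.weight d hd k
  have hd' : (2 : ℝ) ≤ d := by exact_mod_cast hd
  refine ⟨1 / 2 + ((d : ℝ) - 1) / 2 * (2 ^ k * (C * 2)), ?_, ?_⟩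
  · have : 0 ≤ ((d : ℝ) - 1) / 2 := by linarith
    positivity
  intro s h M f hh hs H
  have hb := H.unshift
  have h1 := hb.2.2.const_mul (-(1 / 2))
  have h2 := ((H.of_succ.2.mono_start (Nat.le_succ s)).add hb.of_succ.2)
  have h3 := (((hg s h hh hs).mono_start (Nat.le_succ s)).mul h2).const_mul (-(((d : ℝ) - 1) / 2))
  refine ((h1.add h3).mono hh (le_of_eq ?_)).congr fun l hl => ?_
  · rw [abs_neg, abs_neg, abs_of_nonneg (by norm_num : (0 : ℝ) ≤ 1 / 2),
      abs_of_nonneg (by linarith : (0 : ℝ) ≤ ((d : ℝ) - 1) / 2)]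
    ring
  · obtain ⟨j, rfl⟩ : ∃ j, l = j + 1 := ⟨l - 1, by omega⟩
    have hj : (0 : ℝ) ≤ j := Nat.cast_nonneg j
    have : 2 * ((j : ℝ) + 1) + d - 1 ≠ 0 := by linarith
    simp only [fdiff, _root_.coefOp, Nat.add_sub_cancel]
    push_cast
    field_simp
    ring

lemma DiffBound.coefOp_iterate (d : ℕ) (hd : 2 ≤ d) (j m : ℕ) : ∃ C : ℝ, 0 ≤ C ∧
    ∀ (s : ℕ) (h M : ℝ) (f : ℕ → ℝ), 0 ≤ h → 1 ≤ h * (4 * s) → DiffBound s h (2 * m + j) M f →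
      DiffBound (s + m) h j (C * M * h ^ (2 * m)) ((_root_.coefOp d)^[m] f) := by
  induction m with
  | zero =>
    refine ⟨1, zero_le_one, fun s h M f _ _ H => ?_⟩
    simpa using H
  | succ m ih =>
    obtain ⟨C, hC, H⟩ := ih
    obtain ⟨C', hC', H'⟩ := DiffBound.coefOp d hd (2 * m + j)
    refine ⟨C * C', by positivity, fun s h M f hh hs hf => ?_⟩
    rw [show 2 * (m + 1) + j = 2 * m + j + 2 by ring] at hf
    have := H (s + 1) h _ _ hh (by push_cast; nlinarith) (H' s h M f hh hs hf)
    rw [show s + 1 + m = s + (m + 1) by ring] at this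
    rw [Function.iterate_succ_apply]
    convert this using 1
    ring

lemma coefOp_iterate_eq_zero_of_small (d n : ℕ) (f : ℕ → ℝ) (hf : ∀ l, 2 * l < n → f l = 0)
    (m : ℕ) : ∀ l, 2 * (l + m) < n → (coefOp d)^[m] f l = 0 := by
  induction m with
  | zero => simpa using hf
  | succ m ih =>
    intro l hl
    rw [Function.iterate_succ_apply', coefOp, ih l (by omega), ih (l + 1) (by omega),
      ih (l - 1) (by omega)]
    simp

lemma coefOp_iterate_eq_zero_of_large (d N : ℕ) (f : ℕ → ℝ) (hf : ∀ l, N < l → f l = 0)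
    (m : ℕ) : ∀ l, N + m < l → (coefOp d)^[m] f l = 0 := by
  induction m with
  | zero => simpa using hf
  | succ m ih =>
    intro l hl
    rw [Function.iterate_succ_apply', coefOp, ih l (by omega), ih (l + 1) (by omega),
      ih (l - 1) (by omega)]
    simp

lemma one_sub_pow_mul_sum (d : ℕ) (hd : 2 ≤ d) (N L : ℕ) (f : ℕ → ℝ)
    (hf : ∀ l, N < l → f l = 0) (t : ℝ) (m : ℕ) (hL : N + m < L) :
    (1 - t) ^ m * ∑ l ∈ Finset.range (L + 1), f l * (harmDim d l * normGegenbauer d l t)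
      = ∑ l ∈ Finset.range (L + 1),
          (coefOp d)^[m] f l * (harmDim d l * normGegenbauer d l t) := by
  induction m with
  | zero => simp
  | succ m ih =>
    have h0 := coefOp_iterate_eq_zero_of_large d N f hf m
    simp only [Function.iterate_succ_apply']
    rw [pow_succ', mul_assoc, ih (by omega), one_sub_mul_sum d hd, sum_coefOp d hd,
      h0 L (by omega), h0 (L + 1) (by omega)]
    simp

/-! ### Counting estimates -/

lemma edgeW_le (d : ℕ) (hd : 2 ≤ d) (l : ℕ) (X : ℝ) (hX : (l : ℝ) + d ≤ X) :
    edgeW d l ≤ X ^ (d - 1) := by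
  have h1 : (l + d - 1).choose l = (l + d - 1).choose (d - 1) := by
    rw [← Nat.choose_symm (show l ≤ l + d - 1 by omega)]
    congr 1
    omega
  have h2 : (l + d - 1).choose l ≤ (l + d) ^ (d - 1) := by
    rw [h1]
    exact (Nat.choose_le_pow _ _).trans (Nat.pow_le_pow_left (by omega) _)
  calc edgeW d l ≤ ((l : ℝ) + d) ^ (d - 1) := by unfold edgeW; exact_mod_cast h2
    _ ≤ _ := pow_le_pow_left₀ (by positivity) hX _

lemma abs_harmDim_le (d : ℕ) (hd : 2 ≤ d) (l : ℕ) (X : ℝ) (hX : (l : ℝ) + d ≤ X) :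
    |harmDim d l| ≤ 2 * X ^ (d - 1) := by
  cases l with
  | zero =>
    have h := edgeW_le d hd 0 X hX
    rw [edgeW_zero] at h
    rw [harmDim_zero, abs_one]
    linarith
  | succ l =>
    have h1 := edgeW_le d hd (l + 1) X hX
    have h2 := edgeW_le d hd l X (by push_cast at hX; linarith)
    rw [harmDim_succ_eq_add d hd, abs_of_nonneg (add_nonneg (edgeW_nonneg _ _) (edgeW_nonneg _ _))]
    linarith

lemma abs_sum_le (d : ℕ) (hd : 2 ≤ d) (g : ℕ → ℝ) (G X t : ℝ) (L : ℕ) (ht : t ^ 2 ≤ 1)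
    (hg : ∀ l, |g l| ≤ G) (hX : (L : ℝ) + 1 + d ≤ X) :
    |∑ l ∈ Finset.range (L + 1), g l * (harmDim d l * normGegenbauer d l t)| ≤ 2 * G * X ^ d := by
  have hG : 0 ≤ G := (abs_nonneg _).trans (hg 0)
  have hX0 : 0 ≤ X := le_trans (by positivity) hX
  have hterm : ∀ l ∈ Finset.range (L + 1),
      |g l * (harmDim d l * normGegenbauer d l t)| ≤ G * (2 * X ^ (d - 1)) := by
    intro l hl
    have hl' : (l : ℝ) ≤ L := by exact_mod_cast Nat.lt_succ_iff.1 (Finset.mem_range.1 hl)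
    have h1 := abs_harmDim_le d hd l X (by linarith)
    have h2 := abs_normGegenbauer_le d hd l t ht
    rw [abs_mul, abs_mul]
    refine mul_le_mul (hg l) ?_ (by positivity) hG
    exact (mul_le_of_le_one_right (abs_nonneg _) h2).trans h1
  refine (Finset.abs_sum_le_sum_abs _ _).trans ((Finset.sum_le_card_nsmul _ _ _ hterm).trans ?_)
  rw [Finset.card_range, nsmul_eq_mul]
  have hd1 : X ^ d = X * X ^ (d - 1) := by
    rw [← pow_succ', Nat.sub_add_cancel (by omega)]
  rw [hd1]
  have h3 : ((L + 1 : ℕ) : ℝ) ≤ X := by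
    push_cast
    have : (0 : ℝ) ≤ d := Nat.cast_nonneg d
    linarith
  calc _ ≤ X * (G * (2 * X ^ (d - 1))) := mul_le_mul_of_nonneg_right h3 (by positivity)
    _ = _ := by ring

lemma abs_dirichlet_sum_le (d : ℕ) (hd : 2 ≤ d) (g : ℕ → ℝ) (G X θ : ℝ) (L : ℕ) (hθ : 0 ≤ θ)
    (hg : ∀ l, |g l - g (l + 1)| ≤ G) (hX : (L : ℝ) + 1 + d ≤ X) :
    |∑ l ∈ Finset.range L, edgeW d l * (g l - g (l + 1))
        * (normGegenbauer d l (cos θ) - normGegenbauer d (l + 1) (cos θ))|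
      ≤ 2 * θ * G * X ^ d := by
  have hG : 0 ≤ G := (abs_nonneg _).trans (hg 0)
  have hX0 : 0 ≤ X := le_trans (by positivity) hX
  have hterm : ∀ l ∈ Finset.range L, |edgeW d l * (g l - g (l + 1))
        * (normGegenbauer d l (cos θ) - normGegenbauer d (l + 1) (cos θ))|
      ≤ X ^ (d - 1) * G * (2 * θ) := by
    intro l hl
    have hl' : (l : ℝ) ≤ L := by exact_mod_cast (Finset.mem_range.1 hl).le
    have h1 := edgeW_le d hd l X (by linarith)
    have h2 := abs_normGegenbauer_sub_le d hd l θ hθ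
    rw [abs_mul, abs_mul, abs_of_nonneg (edgeW_nonneg d l)]
    exact mul_le_mul (mul_le_mul h1 (hg l) (abs_nonneg _) (by positivity)) h2 (abs_nonneg _)
      (by positivity)
  refine (Finset.abs_sum_le_sum_abs _ _).trans ((Finset.sum_le_card_nsmul _ _ _ hterm).trans ?_)
  rw [Finset.card_range, nsmul_eq_mul]
  have hd1 : X ^ d = X * X ^ (d - 1) := by
    rw [← pow_succ', Nat.sub_add_cancel (by omega)]
  rw [hd1]
  have h3 : (L : ℝ) ≤ X := by
    have : (0 : ℝ) ≤ d := Nat.cast_nonneg d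
    linarith
  calc _ ≤ X * (X ^ (d - 1) * G * (2 * θ)) := mul_le_mul_of_nonneg_right h3 (by positivity)
    _ = _ := by ring

/-! ### Samples of the filter -/

lemma IsFilter.exists_diffBound {η : ℝ → ℝ} {κ : ℕ} (hη : IsFilter η κ) :
    ∃ M : ℝ, ∀ n : ℕ, DiffBound 0 (1 / (n : ℝ)) κ M (fun l => η ((l : ℝ) / n)) := by
  -- Extended by zero to the negative axis, `η` is `C^κ` on the line because it vanishes near `0`.
  set F : ℝ → ℝ := Set.indicator (Set.Ici 0) η with hF
  have hz : ∀ x, x ∉ Set.Icc (1 / 2 : ℝ) 2 → F x = 0 := by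
    intro x hx
    by_cases h0 : 0 ≤ x
    · rw [hF, Set.indicator_of_mem (Set.mem_Ici.2 h0)]; exact hη.supp x h0 hx
    · rw [hF, Set.indicator_of_notMem (by simpa using h0)]
  have hFc : ContDiff ℝ κ F := by
    rw [contDiff_iff_contDiffAt]
    intro x
    rcases lt_or_ge x (1 / 2) with hx | hx
    · have : F =ᶠ[nhds x] fun _ => 0 := by
        filter_upwards [Iio_mem_nhds hx] with y hy
        exact hz y fun h => absurd h.1 (not_le.2 hy)
      exact contDiffAt_const.congr_of_eventuallyEq this
    · have h0 : 0 < x := by linarith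
      have : F =ᶠ[nhds x] η := by
        filter_upwards [Ioi_mem_nhds h0] with y hy
        exact Set.indicator_of_mem (Set.mem_Ici.2 (le_of_lt hy)) η
      exact (hη.smooth.contDiffAt (Ici_mem_nhds h0)).congr_of_eventuallyEq this
  have hcs : HasCompactSupport F := HasCompactSupport.intro isCompact_Icc hz
  have hb : ∀ i : ℕ, ∃ B : ℝ, i ≤ κ → ∀ x, |iteratedDeriv i F x| ≤ B := by
    intro i
    by_cases hi : i ≤ κ
    · have hc : Continuous (iteratedDeriv i F) := hFc.continuous_iteratedDeriv i (by exact_mod_cast hi)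
      have hs : HasCompactSupport (iteratedDeriv i F) := by
        have := hcs.iteratedFDeriv (𝕜 := ℝ) i
        refine this.mono' ?_
        intro x hx
        apply subset_closure
        intro h
        apply hx
        rw [iteratedDeriv_eq_iteratedFDeriv, h]
        rfl
      obtain ⟨B, hB⟩ := hc.bounded_above_of_compact_support hs
      exact ⟨B, fun _ => hB⟩
    · exact ⟨0, fun h => absurd h hi⟩
  choose B hB using hb
  refine ⟨∑ i ∈ Finset.range (κ + 1), |B i|, fun n => ?_⟩
  refine (DiffBound.of_contDiff (by positivity) hFc fun i hi x => ?_).congr fun l _ => ?_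
  · refine ((hB i hi x).trans (le_abs_self _)).trans ?_
    exact Finset.single_le_sum (f := fun i => |B i|) (fun _ _ => abs_nonneg _)
      (Finset.mem_range.2 (by omega))
  · have : (l : ℝ) * (1 / n) = l / n := by ring
    rw [this, hF, Set.indicator_of_mem]
    exact Set.mem_Ici.2 (by positivity)

lemma IsFilter.sample_eq_zero_of_small {η : ℝ → ℝ} {κ : ℕ} (hη : IsFilter η κ) (n : ℕ)
    (hn : 1 ≤ n) (l : ℕ) (hl : 2 * l < n) : η ((l : ℝ) / n) = 0 := by
  have hn' : (0 : ℝ) < n := by exact_mod_cast hn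
  have hl' : 2 * (l : ℝ) < n := by exact_mod_cast hl
  refine hη.supp _ (by positivity) fun h => absurd h.1 ?_
  rw [not_le, div_lt_iff₀ hn']
  linarith

lemma IsFilter.sample_eq_zero_of_large {η : ℝ → ℝ} {κ : ℕ} (hη : IsFilter η κ) (n : ℕ)
    (hn : 1 ≤ n) (l : ℕ) (hl : 2 * n < l) : η ((l : ℝ) / n) = 0 := by
  have hn' : (0 : ℝ) < n := by exact_mod_cast hn
  have hl' : 2 * (n : ℝ) < l := by exact_mod_cast hl
  refine hη.supp _ (by positivity) fun h => absurd h.2 ?_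
  rw [not_le, lt_div_iff₀ hn']
  linarith

lemma filteredKernel_eq_sum (d κ : ℕ) (η : ℝ → ℝ) (hη : IsFilter η κ) (n : ℕ) (hn : 1 ≤ n)
    (t : ℝ) : filteredKernel d η n t = (∑ l ∈ Finset.range (2 * n + κ + 1 + 1),
      η ((l : ℝ) / n) * (harmDim d l * normGegenbauer d l t)) * (sphereVol d)⁻¹ := by
  rw [filteredKernel, tsum_eq_sum (s := Finset.range (2 * n + κ + 1 + 1)), Finset.sum_mul]
  · exact Finset.sum_congr rfl fun l _ => by ring
  · intro l hl
    rw [Finset.mem_range, not_lt] at hl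
    rw [hη.sample_eq_zero_of_large n hn l (by omega)]
    ring

lemma range_le (d κ n : ℕ) (hn : 1 ≤ n) :
    ((2 * n + κ + 1 : ℕ) : ℝ) + 1 + d ≤ (κ + d + 4) * n := by
  have hn' : (1 : ℝ) ≤ n := by exact_mod_cast hn
  have h1 : (κ : ℝ) ≤ κ * n := le_mul_of_one_le_right (Nat.cast_nonneg _) hn'
  have h2 : (d : ℝ) ≤ d * n := le_mul_of_one_le_right (Nat.cast_nonneg _) hn'
  push_cast
  nlinarith

/-! ### Estimates for the kernel -/

/-- The bound of size `n ^ d` that comes from counting terms. -/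
lemma exists_trivial_bound (d : ℕ) (hd : 2 ≤ d) (κ : ℕ) (η : ℝ → ℝ) (M : ℝ)
    (hM : ∀ n : ℕ, DiffBound 0 (1 / (n : ℝ)) κ M (fun l => η ((l : ℝ) / n))) :
    ∃ C : ℝ, 0 ≤ C ∧ ∀ n : ℕ, 1 ≤ n → ∀ θ : ℝ, |∑ l ∈ Finset.range (2 * n + κ + 1 + 1),
      η ((l : ℝ) / n) * (harmDim d l * normGegenbauer d l (cos θ))| ≤ C * n ^ d := by
  have hM0 : 0 ≤ M := (hM 0).nonneg
  refine ⟨2 * M * (κ + d + 4) ^ d, by positivity, fun n hn θ => ?_⟩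
  refine (abs_sum_le d hd _ M _ _ _ (cos_sq_le_one θ)
    (fun l => (hM n).abs_le l (Nat.zero_le l)) (range_le d κ n hn)).trans (le_of_eq ?_)
  rw [mul_pow]; ring

/-- The decay in `n * θ`, from multiplying the kernel by `(1 - cos θ) ^ ⌈κ / 2⌉ ≳ θ ^ (2⌈κ / 2⌉)`.
For odd `κ` the last multiplication moves only one difference onto the coefficients, and the
missing power of `θ` is recovered from `|P_l - P_{l+1}| ≤ 2 θ`. -/
lemma exists_tail_bound (d : ℕ) (hd : 2 ≤ d) (κ : ℕ) (η : ℝ → ℝ) (hη : IsFilter η κ) (M : ℝ)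
    (hM : ∀ n : ℕ, DiffBound 0 (1 / (n : ℝ)) κ M (fun l => η ((l : ℝ) / n))) :
    ∃ C : ℝ, 0 ≤ C ∧ ∀ n : ℕ, 8 * κ + 8 < n → ∀ θ ∈ Set.Icc (0 : ℝ) Real.pi,
      |∑ l ∈ Finset.range (2 * n + κ + 1 + 1),
        η ((l : ℝ) / n) * (harmDim d l * normGegenbauer d l (cos θ))| * (n * θ) ^ κ
        ≤ C * n ^ d := by
  have hM0 : 0 ≤ M := (hM 0).nonneg
  obtain ⟨m, j, hj, hκ⟩ : ∃ m j : ℕ, j < 2 ∧ κ = 2 * m + j :=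
    ⟨κ / 2, κ % 2, Nat.mod_lt _ two_pos, (Nat.div_add_mod κ 2).symm⟩
  obtain ⟨C, hC, hT⟩ := DiffBound.coefOp_iterate d hd j m
  have hpi := Real.pi_pos
  refine ⟨(Real.pi ^ 2 / 2) ^ (m + j) * (2 * (C * M) * (κ + d + 4) ^ d), by positivity, ?_⟩
  intro n hbig θ hθ
  have hn : 1 ≤ n := by omega
  have hn' : (0 : ℝ) < n := by exact_mod_cast hn
  set f : ℕ → ℝ := fun l => η ((l : ℝ) / n) with hf
  set L := 2 * n + κ + 1 with hL
  set t := cos θ with ht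
  set S := ∑ l ∈ Finset.range (L + 1), f l * (harmDim d l * normGegenbauer d l t) with hS
  change |S| * (n * θ) ^ κ ≤ _
  set s := n / 4 + 1 with hs
  have hs4 : (1 : ℝ) ≤ 1 / n * (4 * s) := by
    have : (n : ℝ) ≤ 4 * s := by exact_mod_cast (show n ≤ 4 * s by omega)
    rw [one_div, inv_mul_eq_div, le_div_iff₀ hn']
    linarith
  have hB := hT s (1 / n) M f (by positivity) hs4 (by
    rw [← hκ]; exact (hM n).mono_start (Nat.zero_le s))
  have hsmall := coefOp_iterate_eq_zero_of_small d n f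
    (fun l hl => hη.sample_eq_zero_of_small n hn l hl) m
  have hlarge := coefOp_iterate_eq_zero_of_large d (2 * n) f
    (fun l hl => hη.sample_eq_zero_of_large n hn l hl) m
  have hid := one_sub_pow_mul_sum d hd (2 * n) L f
    (fun l hl => hη.sample_eq_zero_of_large n hn l hl) t m (by omega)
  have hX := range_le d κ n hn
  set g := (coefOp d)^[m] f with hg
  have hcos : θ ^ 2 ≤ Real.pi ^ 2 / 2 * (1 - t) := by
    have := Real.cos_le_one_sub_mul_cos_sq (x := θ) (by rw [abs_of_nonneg hθ.1]; exact hθ.2)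
    have h2 : Real.pi ^ 2 / 2 * (2 / Real.pi ^ 2 * θ ^ 2) = θ ^ 2 := by field_simp
    rw [← h2]
    exact mul_le_mul_of_nonneg_left (by linarith) (by positivity)
  have ht1 : 0 ≤ 1 - t := by linarith [cos_le_one θ]
  have main : (1 - t) ^ (m + j) * |S|
      ≤ θ ^ j * (2 * (C * M * (1 / n) ^ κ) * ((κ + d + 4) * n) ^ d) := by
    interval_cases j
    · have hg0 : ∀ l, |g l| ≤ C * M * (1 / n) ^ (2 * m) := by
        intro l
        rcases le_or_gt (s + m) l with h | h
        · exact hB.abs_le l h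
        · rw [hsmall l (by omega), abs_zero]; positivity
      have := abs_sum_le d hd g _ _ t L (cos_sq_le_one θ) hg0 hX
      rw [← hid, abs_mul, abs_of_nonneg (pow_nonneg ht1 m)] at this
      simpa [hκ] using this
    · have hg1 : ∀ l, |g l - g (l + 1)| ≤ C * M * (1 / n) ^ (2 * m) * (1 / n) := by
        intro l
        rcases le_or_gt (s + m) l with h | h
        · rw [abs_sub_comm]; exact hB.2 l h
        · rw [hsmall l (by omega), hsmall (l + 1) (by omega), sub_zero, abs_zero]; positivity
      have h1 := abs_dirichlet_sum_le d hd g _ _ θ L hθ.1 hg1 hX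
      have h2 := one_sub_mul_sum d hd g t L
      rw [hlarge L (by omega), mul_zero, zero_mul, add_zero, ← hid, ← mul_assoc,
        ← pow_succ'] at h2
      rw [← h2, abs_mul, abs_of_nonneg (pow_nonneg ht1 _)] at h1
      refine h1.trans (le_of_eq ?_)
      rw [hκ]; ring
  have hpow : θ ^ (2 * (m + j)) * |S| ≤ θ ^ j * ((Real.pi ^ 2 / 2) ^ (m + j)
      * (2 * (C * M * (1 / n) ^ κ) * ((κ + d + 4) * n) ^ d)) := by
    have h1 : θ ^ (2 * (m + j)) ≤ (Real.pi ^ 2 / 2) ^ (m + j) * (1 - t) ^ (m + j) := by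
      rw [pow_mul, ← mul_pow]
      exact pow_le_pow_left₀ (sq_nonneg θ) hcos _
    calc _ ≤ (Real.pi ^ 2 / 2) ^ (m + j) * (1 - t) ^ (m + j) * |S| :=
          mul_le_mul_of_nonneg_right h1 (abs_nonneg _)
      _ ≤ (Real.pi ^ 2 / 2) ^ (m + j)
          * (θ ^ j * (2 * (C * M * (1 / n) ^ κ) * ((κ + d + 4) * n) ^ d)) := by
          rw [mul_assoc]; exact mul_le_mul_of_nonneg_left main (by positivity)
      _ = _ := by ring
  have hfin : θ ^ κ * |S| ≤ (Real.pi ^ 2 / 2) ^ (m + j)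
      * (2 * (C * M * (1 / n) ^ κ) * ((κ + d + 4) * n) ^ d) := by
    rcases hθ.1.eq_or_lt with h0 | h0
    · rcases Nat.eq_zero_or_pos κ with hk | hk
      · have hm0 : m = 0 := by omega
        have hj0 : j = 0 := by omega
        subst hm0 hj0
        simpa [hk] using hpow
      · rw [← h0, zero_pow hk.ne', zero_mul]
        positivity
    · rw [show 2 * (m + j) = j + κ by omega, pow_add, mul_assoc] at hpow
      exact le_of_mul_le_mul_left hpow (pow_pos h0 j)
  have hnk : (n : ℝ) ^ κ * (1 / n) ^ κ = 1 := by
    rw [← mul_pow, mul_one_div_cancel hn'.ne', one_pow]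
  calc |S| * (n * θ) ^ κ = n ^ κ * (θ ^ κ * |S|) := by rw [mul_pow]; ring
    _ ≤ n ^ κ * ((Real.pi ^ 2 / 2) ^ (m + j)
      * (2 * (C * M * (1 / n) ^ κ) * ((κ + d + 4) * n) ^ d)) :=
        mul_le_mul_of_nonneg_left hfin (by positivity)
    _ = ((n : ℝ) ^ κ * (1 / n) ^ κ) * ((Real.pi ^ 2 / 2) ^ (m + j)
      * (2 * (C * M) * ((κ + d + 4) * n) ^ d)) := by ring
    _ = _ := by rw [hnk, one_mul, mul_pow]; ring

/-- Localization of the filtered kernel: for a filter `η ∈ C^κ(ℝ₊)`, `1 ≤ κ < ∞`, constant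
on `[0,a]` for some `0 < a < 2`, one has `|K_n(cos θ)| ≤ c n^d / (1 + nθ)^κ` for all `n ≥ 1`,
where `c` depends only on `d, η, κ`. -/
theorem stmt_17 (d : ℕ) (hd : 2 ≤ d) (κ : ℕ) (hκ : 1 ≤ κ)
    (η : ℝ → ℝ) (hη : IsFilter η κ)
    (a : ℝ) (ha₀ : 0 < a) (ha₂ : a < 2)
    (hconst : ∀ t ∈ Set.Icc (0 : ℝ) a, η t = η 0) :
    ∃ c > (0 : ℝ), ∀ (n : ℕ), 1 ≤ n → ∀ θ ∈ Set.Icc (0 : ℝ) Real.pi,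
      |filteredKernel d η n (Real.cos θ)| ≤
        c * (n : ℝ) ^ (d : ℕ) / (1 + (n : ℝ) * θ) ^ (κ : ℕ) := by
  obtain ⟨M, hM⟩ := hη.exists_diffBound
  obtain ⟨C₁, hC₁, H₁⟩ := exists_tail_bound d hd κ η hη M hM
  obtain ⟨C₀, hC₀, H₀⟩ := exists_trivial_bound d hd κ η M hM
  -- Beyond `R` the condition `R < n * θ` forces `n > 8 * κ + 8`.
  set R : ℝ := Real.pi * (8 * κ + 8) with hR
  have hR1 : 1 ≤ R := by
    have : (0 : ℝ) ≤ κ := Nat.cast_nonneg κ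
    nlinarith [Real.pi_gt_three]
  set v : ℝ := |(sphereVol d)⁻¹| with hv
  have hv0 : 0 ≤ v := abs_nonneg _
  refine ⟨v * (C₀ * (1 + R) ^ κ + 2 ^ κ * C₁) + 1, by positivity, fun n hn θ hθ => ?_⟩
  have hnθ : 0 ≤ (n : ℝ) * θ := mul_nonneg (Nat.cast_nonneg n) hθ.1
  have hnd : 0 ≤ (n : ℝ) ^ d := by positivity
  rw [le_div_iff₀ (by positivity), filteredKernel_eq_sum d κ η hη n hn, abs_mul, ← hv]
  set S := |∑ l ∈ Finset.range (2 * n + κ + 1 + 1),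
    η ((l : ℝ) / n) * (harmDim d l * normGegenbauer d l (cos θ))| with hS
  have hS0 : 0 ≤ S := abs_nonneg _
  have key : S * (1 + n * θ) ^ κ ≤ (C₀ * (1 + R) ^ κ + 2 ^ κ * C₁) * n ^ d := by
    have t1 : 0 ≤ C₀ * (1 + R) ^ κ * n ^ d := by positivity
    have t2 : 0 ≤ 2 ^ κ * C₁ * (n : ℝ) ^ d := by positivity
    rw [add_mul]
    rcases le_or_gt ((n : ℝ) * θ) R with h | h
    · have : S * (1 + n * θ) ^ κ ≤ C₀ * n ^ d * (1 + R) ^ κ :=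
        mul_le_mul (H₀ n hn θ) (pow_le_pow_left₀ (by positivity) (by linarith) _)
          (by positivity) (by positivity)
      linarith
    · have hbig : 8 * κ + 8 < n := by
        have : Real.pi * (8 * κ + 8) < Real.pi * n := by
          nlinarith [mul_le_mul_of_nonneg_left hθ.2 (Nat.cast_nonneg (α := ℝ) n)]
        exact_mod_cast lt_of_mul_lt_mul_left this Real.pi_pos.le
      have hp : (1 + (n : ℝ) * θ) ^ κ ≤ (2 * (n * θ)) ^ κ :=
        pow_le_pow_left₀ (by positivity) (by linarith) _
      have h3 := H₁ n hbig θ hθ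
      calc S * (1 + n * θ) ^ κ ≤ S * (2 * (n * θ)) ^ κ := mul_le_mul_of_nonneg_left hp hS0
        _ = 2 ^ κ * (S * (n * θ) ^ κ) := by rw [mul_pow]; ring
        _ ≤ 2 ^ κ * (C₁ * n ^ d) := mul_le_mul_of_nonneg_left h3 (by positivity)
        _ ≤ _ := by linarith
  calc S * v * (1 + n * θ) ^ κ = v * (S * (1 + n * θ) ^ κ) := by ring
    _ ≤ v * ((C₀ * (1 + R) ^ κ + 2 ^ κ * C₁) * n ^ d) := mul_le_mul_of_nonneg_left key hv0
    _ ≤ _ := by nlinarith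
end

section
/- Let 1 ≤ p < q ≤ ∞, let n ≥ 1 be an integer, and let P be a spherical polynomial of degree at most n on S^d. Then ‖P‖_{L_q(S^d)} ≤ C̃₁ n^{d/p − d/q} ‖P‖_{L_p(S^d)}, where C̃₁ > 0 depends only on d, p, q. -/
/-!
Let `M = |P x₀|` be the maximum of `|P|` on the sphere. On each great circle through `x₀`, `P` is
a trigonometric polynomial of degree at most `n` bounded by `M`, so Bernstein's inequality
(`abs_eval_sub_le`, with a non-sharp constant) gives `|P| ≥ M / 2` on the cap of radius `1 / (6 n)`
around `x₀`. That cap has measure at least a constant times `n ^ (-d)` (`cap_measure_ge`), and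
Chebyshev's inequality yields `M ≤ C n ^ (d / p) ‖P‖_p` (`exists_bound_le_eLpNorm`). The case of
finite `q` follows from `‖P‖_q ≤ M ^ (1 - p / q) ‖P‖_p ^ (p / q)` (`eLpNorm_le_interp`).

For Bernstein's inequality, the function `T` of a complex angle `w` extending `P` on the circle has
the property that `e ^ (i n w) T(w)` is an entire function of `e ^ (i w)`. The maximum modulus
principle on the unit disc gives `|T(w)| ≤ M e ^ (n |Im w|)`, and the Cauchy estimate on a disc of
radius `1 / n` about a real point gives `|T'| ≤ e n M`.
-/

open MeasureTheory ProbabilityTheory Real Filter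
open scoped BigOperators ENNReal RealInnerProductSpace

/-! ### Bernstein's inequality on great circles -/

/-- The polynomial `p` along the curve `w ↦ cos w • x + sin w • u`, as a function of a complex
angle `w`. For `x`, `u` orthonormal and `w` real this is the restriction of `p` to a great
circle. -/
noncomputable def circleFun {N : ℕ} (p : MvPolynomial (Fin N) ℝ) (x u : Fin N → ℝ) (w : ℂ) : ℂ :=
  MvPolynomial.aeval (fun i => Complex.cos w * (x i : ℂ) + Complex.sin w * (u i : ℂ)) p

lemma circleFun_ofReal {N : ℕ} (p : MvPolynomial (Fin N) ℝ) (x u : Fin N → ℝ) (θ : ℝ) :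
    circleFun p x u (θ : ℂ) =
      ((MvPolynomial.eval (fun i => Real.cos θ * x i + Real.sin θ * u i) p : ℝ) : ℂ) := by
  unfold circleFun
  rw [MvPolynomial.aeval_def, MvPolynomial.eval₂_eq', MvPolynomial.eval_eq']
  push_cast
  rfl

lemma circleFun_neg {N : ℕ} (p : MvPolynomial (Fin N) ℝ) (x u : Fin N → ℝ) (w : ℂ) :
    circleFun p x u (-w) = circleFun p x (-u) w := by
  simp [circleFun]

lemma differentiable_circleFun {N : ℕ} (p : MvPolynomial (Fin N) ℝ) (x u : Fin N → ℝ) :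
    Differentiable ℂ (circleFun p x u) := by
  unfold circleFun
  simp only [MvPolynomial.aeval_def, MvPolynomial.eval₂_eq']
  fun_prop

/-- A polynomial of degree at most `n` becomes a trigonometric polynomial of degree at most `n`
on a great circle: after multiplication by `e^{inw}` it is an entire function of `e^{iw}`. -/
lemma exists_entire_of_circleFun {N n : ℕ} (p : MvPolynomial (Fin N) ℝ) (hp : p.totalDegree ≤ n)
    (x u : Fin N → ℝ) :
    ∃ Q : ℂ → ℂ, Differentiable ℂ Q ∧
      ∀ w, Complex.exp (w * Complex.I) ^ n * circleFun p x u w = Q (Complex.exp (w * Complex.I)) := by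
  refine ⟨fun z => ∑ m ∈ p.support, ((p.coeff m : ℝ) : ℂ) * (z ^ (n - ∑ i, m i) *
    ∏ i, ((z ^ 2 + 1) / 2 * (x i : ℂ) + (1 - z ^ 2) * Complex.I / 2 * (u i : ℂ)) ^ m i),
    by fun_prop, fun w => ?_⟩
  unfold circleFun
  rw [MvPolynomial.aeval_def, MvPolynomial.eval₂_eq', Finset.mul_sum]
  refine Finset.sum_congr rfl fun m hm => ?_
  have hmn : ∑ i, m i ≤ n := by
    have h := MvPolynomial.le_totalDegree hm
    rw [Finsupp.sum_fintype _ _ (fun _ => rfl)] at h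
    exact h.trans hp
  set e := Complex.exp (w * Complex.I) with he
  have hinv : Complex.exp (-w * Complex.I) * e = 1 := by
    rw [he, ← Complex.exp_add]; simp
  have hc : e * Complex.cos w = (e ^ 2 + 1) / 2 := by
    rw [Complex.cos, ← he]; linear_combination hinv / 2
  have hs : e * Complex.sin w = (1 - e ^ 2) * Complex.I / 2 := by
    rw [Complex.sin, ← he]; linear_combination hinv * Complex.I / 2
  have key : ∀ i, (e ^ 2 + 1) / 2 * (x i : ℂ) + (1 - e ^ 2) * Complex.I / 2 * (u i : ℂ)
      = e * (Complex.cos w * (x i : ℂ) + Complex.sin w * (u i : ℂ)) := fun i => by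
    rw [← hc, ← hs]; ring
  simp only [key, mul_pow]
  rw [Finset.prod_mul_distrib, Finset.prod_pow_eq_pow_sum]
  conv_lhs => rw [← Nat.sub_add_cancel hmn, pow_add]
  simp only [Complex.coe_algebraMap]
  ring

/-- Growth in the upper half-plane: the maximum modulus principle for the entire function of
`e^{iw}` on the closed unit disc. -/
lemma norm_circleFun_le_of_nonneg {N n : ℕ} (p : MvPolynomial (Fin N) ℝ) (hp : p.totalDegree ≤ n)
    (x u : Fin N → ℝ) {M : ℝ} (hM : ∀ θ : ℝ, ‖circleFun p x u (θ : ℂ)‖ ≤ M)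
    (w : ℂ) (hw : 0 ≤ w.im) : ‖circleFun p x u w‖ ≤ M * Real.exp (n * w.im) := by
  obtain ⟨Q, hQd, hQ⟩ := exists_entire_of_circleFun p hp x u
  have hfr : ∀ z ∈ frontier (Metric.ball (0 : ℂ) 1), ‖Q z‖ ≤ M := by
    intro z hz
    rw [frontier_ball _ one_ne_zero, mem_sphere_zero_iff_norm] at hz
    have h := hQ (z.arg : ℂ)
    have hz' : Complex.exp (z.arg * Complex.I) = z := by
      have := Complex.norm_mul_exp_arg_mul_I z
      rwa [hz, Complex.ofReal_one, one_mul] at this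
    rw [hz'] at h
    rw [← h, norm_mul, norm_pow, hz, one_pow, one_mul]
    exact hM _
  have hnorm : ‖Complex.exp (w * Complex.I)‖ = Real.exp (-w.im) := by
    rw [Complex.norm_exp]; simp
  have hle : ‖Q (Complex.exp (w * Complex.I))‖ ≤ M := by
    refine Complex.norm_le_of_forall_mem_frontier_norm_le Metric.isBounded_ball
      hQd.diffContOnCl hfr ?_
    rw [closure_ball _ one_ne_zero, mem_closedBall_zero_iff, hnorm]
    exact Real.exp_le_one_iff.2 (by linarith)
  rw [← hQ, norm_mul, norm_pow, hnorm, ← Real.exp_nat_mul] at hle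
  calc ‖circleFun p x u w‖
      = (Real.exp (n * -w.im) * ‖circleFun p x u w‖) * Real.exp (n * w.im) := by
        rw [mul_right_comm, ← Real.exp_add]; simp
    _ ≤ M * Real.exp (n * w.im) := by gcongr

lemma norm_circleFun_le {N n : ℕ} (p : MvPolynomial (Fin N) ℝ) (hp : p.totalDegree ≤ n)
    (x u : Fin N → ℝ) {M : ℝ} (hM : ∀ θ : ℝ, ‖circleFun p x u (θ : ℂ)‖ ≤ M)
    (w : ℂ) : ‖circleFun p x u w‖ ≤ M * Real.exp (n * |w.im|) := by
  rcases le_total 0 w.im with h | h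
  · rw [abs_of_nonneg h]
    exact norm_circleFun_le_of_nonneg p hp x u hM w h
  · have h1 : circleFun p x u w = circleFun p x (-u) (-w) := by
      rw [← circleFun_neg, neg_neg]
    rw [h1, abs_of_nonpos h]
    refine norm_circleFun_le_of_nonneg p hp x (-u) (fun θ => ?_) (-w) (by simpa using h)
    rw [← circleFun_neg, ← Complex.ofReal_neg]
    exact hM _

/-- A Bernstein inequality (with constant `e ≤ 3`), from the Cauchy estimate on discs of radius
`1/n` centred on the real axis. -/
lemma abs_eval_sub_le {N n : ℕ} (hn : 1 ≤ n) (p : MvPolynomial (Fin N) ℝ)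
    (hp : p.totalDegree ≤ n) (x u : Fin N → ℝ) {M : ℝ}
    (hM : ∀ θ : ℝ, |MvPolynomial.eval (fun i => Real.cos θ * x i + Real.sin θ * u i) p| ≤ M)
    {θ : ℝ} (hθ : 0 ≤ θ) :
    |MvPolynomial.eval (fun i => Real.cos θ * x i + Real.sin θ * u i) p
      - MvPolynomial.eval x p| ≤ 3 * n * M * θ := by
  have hM0 : 0 ≤ M := (abs_nonneg _).trans (hM 0)
  have hn0 : (0 : ℝ) < n := by exact_mod_cast hn
  have hM' : ∀ θ : ℝ, ‖circleFun p x u (θ : ℂ)‖ ≤ M := fun θ => by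
    rw [circleFun_ofReal, Complex.norm_real]; exact hM θ
  have hd := differentiable_circleFun p x u
  have hder : ∀ t : ℝ, ‖deriv (circleFun p x u) (t : ℂ)‖ ≤ 3 * n * M := by
    intro t
    have h := Complex.norm_deriv_le_of_forall_mem_sphere_norm_le (c := (t : ℂ))
      (R := 1 / n) (C := M * Real.exp 1) (by positivity) hd.diffContOnCl ?_
    · refine h.trans ?_
      rw [div_div_eq_mul_div, div_one]
      have := Real.exp_one_lt_three
      nlinarith [mul_nonneg hM0 hn0.le]
    · intro z hz
      refine (norm_circleFun_le p hp x u hM' z).trans ?_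
      gcongr
      have h1 : |z.im| ≤ 1 / n := by
        rw [mem_sphere_iff_norm] at hz
        rw [← hz]
        simpa using Complex.abs_im_le_norm (z - t)
      calc (n : ℝ) * |z.im| ≤ n * (1 / n) := by gcongr
        _ = 1 := by field_simp
  have hmv := norm_image_sub_le_of_norm_deriv_le_segment' (a := 0) (b := θ) (C := 3 * n * M)
    (f := fun t : ℝ => circleFun p x u (t : ℂ))
    (f' := fun t : ℝ => deriv (circleFun p x u) (t : ℂ))
    (fun t _ => ((hd (t : ℂ)).hasDerivAt.comp_ofReal).hasDerivWithinAt)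
    (fun t _ => hder t) θ (Set.right_mem_Icc.2 hθ)
  rw [circleFun_ofReal, circleFun_ofReal, ← Complex.ofReal_sub, Complex.norm_real] at hmv
  simpa using hmv

/-! ### Measure of spherical caps -/

/-- A set `D` containing the spherical cap of radius `r ≤ 1` about `x₀` has `d`-dimensional
Hausdorff measure at least `(r / d) ^ d`: the orthogonal projection to the tangent hyperplane, with the sup norm there, is
`1`-Lipschitz and its image contains a cube of half-side `r / (2 d)`. -/
lemma cap_measure_ge {d : ℕ} (hd : 1 ≤ d) (x₀ : UnitSphere d) {r : ℝ} (hr : 0 < r) (hr1 : r ≤ 1)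
    (D : Set (UnitSphere d)) (h0 : x₀ ∈ D)
    (hD : ∀ (y : UnitSphere d) (u : EuclideanSpace ℝ (Fin (d + 1))) (θ : ℝ),
      ‖u‖ = 1 → ⟪(x₀ : EuclideanSpace ℝ (Fin (d + 1))), u⟫ = 0 → 0 ≤ θ → θ ≤ r →
      (y : EuclideanSpace ℝ (Fin (d + 1))) = Real.cos θ • (x₀ : EuclideanSpace ℝ (Fin (d + 1)))
        + Real.sin θ • u → y ∈ D) :
    ENNReal.ofReal ((r / d) ^ d) ≤ sphereMeasure d D := by
  have hd0 : (1 : ℝ) ≤ d := by exact_mod_cast hd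
  have hx0 : ‖(x₀ : EuclideanSpace ℝ (Fin (d + 1)))‖ = 1 := by simp
  obtain ⟨b, hb⟩ : ∃ b : OrthonormalBasis (Fin (d + 1)) ℝ (EuclideanSpace ℝ (Fin (d + 1))),
      b 0 = x₀ := by
    have hv : Orthonormal ℝ (({0} : Set (Fin (d + 1))).domRestrict
        (fun _ => (x₀ : EuclideanSpace ℝ (Fin (d + 1))))) := by
      refine ⟨fun _ => hx0, fun i j hij => absurd (Subsingleton.elim i j) hij⟩
    obtain ⟨b, hb⟩ := hv.exists_orthonormalBasis_extension_of_card_eq (by simp)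
    exact ⟨b, hb 0 rfl⟩
  let T : UnitSphere d → (Fin d → ℝ) := fun y i =>
    ⟪b i.succ, (y : EuclideanSpace ℝ (Fin (d + 1)))⟫
  have hT : LipschitzWith 1 T := by
    refine LipschitzWith.of_dist_le_mul fun y z => ?_
    rw [NNReal.coe_one, one_mul, dist_pi_le_iff dist_nonneg]
    intro i
    rw [Real.dist_eq, ← inner_sub_right, Subtype.dist_eq, dist_eq_norm]
    refine (abs_real_inner_le_norm _ _).trans ?_
    simp
  have hsub : Metric.ball (0 : Fin d → ℝ) (r / (2 * d)) ⊆ T '' D := by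
    intro v hv
    have hvi : ∀ i, |v i| ≤ r / (2 * d) := fun i => by
      rw [mem_ball_zero_iff] at hv
      exact (norm_le_pi_norm v i).trans hv.le
    set V : EuclideanSpace ℝ (Fin (d + 1)) := ∑ i : Fin d, v i • b i.succ with hV
    have hVj : ∀ j : Fin d, ⟪b j.succ, V⟫ = v j := by
      intro j
      simp [hV, inner_sum, inner_smul_right, b.inner_eq_ite]
    have hV0 : ⟪b 0, V⟫ = 0 := by
      rw [hV, inner_sum]
      refine Finset.sum_eq_zero fun i _ => ?_
      rw [inner_smul_right, b.inner_eq_ite, if_neg (Fin.succ_ne_zero i).symm, mul_zero]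
    have hVn : ‖V‖ ≤ r / 2 := by
      calc ‖V‖ ≤ ∑ i : Fin d, ‖v i • b i.succ‖ := norm_sum_le _ _
        _ ≤ ∑ i : Fin d, r / (2 * d) := by
            refine Finset.sum_le_sum fun i _ => ?_
            rw [norm_smul, b.norm_eq_one, mul_one]
            exact hvi i
        _ = r / 2 := by
            rw [Finset.sum_const, Finset.card_univ, Fintype.card_fin, nsmul_eq_mul]
            field_simp
    by_cases hVz : V = 0
    · refine ⟨x₀, h0, ?_⟩
      funext i
      rw [← hVj i, hVz, inner_zero_right]
      simp only [T]
      rw [← hb, b.inner_eq_ite, if_neg (Fin.succ_ne_zero i)]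
    have hVpos : 0 < ‖V‖ := norm_pos_iff.2 hVz
    set θ := Real.arcsin ‖V‖ with hθ
    have hsin : Real.sin θ = ‖V‖ := Real.sin_arcsin (by linarith) (by linarith)
    have hθ0 : 0 ≤ θ := Real.arcsin_nonneg.2 hVpos.le
    have hθr : θ ≤ r := by
      have h := Real.mul_le_sin hθ0 (Real.arcsin_le_pi_div_two _)
      rw [hsin] at h
      have h2 : θ ≤ Real.pi / 2 * ‖V‖ := by
        have : θ = Real.pi / 2 * (2 / Real.pi * θ) := by
          field_simp
        rw [this]; gcongr
      have := Real.pi_lt_four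
      nlinarith
    set u := ‖V‖⁻¹ • V with hu
    have hun : ‖u‖ = 1 := by
      rw [hu, norm_smul, norm_inv, norm_norm, inv_mul_cancel₀ hVpos.ne']
    have hxu : ⟪(x₀ : EuclideanSpace ℝ (Fin (d + 1))), u⟫ = 0 := by
      rw [hu, inner_smul_right, ← hb, hV0, mul_zero]
    have hsu : Real.sin θ • u = V := by
      rw [hsin, hu, smul_smul, mul_inv_cancel₀ hVpos.ne', one_smul]
    have hyn : ‖Real.cos θ • (x₀ : EuclideanSpace ℝ (Fin (d + 1))) + Real.sin θ • u‖ = 1 := by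
      have h2 : ‖Real.cos θ • (x₀ : EuclideanSpace ℝ (Fin (d + 1))) + Real.sin θ • u‖ ^ 2 = 1 := by
        rw [norm_add_sq_real, norm_smul, norm_smul, inner_smul_left, inner_smul_right, hxu, hx0,
          hun]
        simp
      exact (pow_eq_one_iff_of_nonneg (norm_nonneg _) two_ne_zero).1 h2
    refine ⟨⟨_, mem_sphere_zero_iff_norm.2 hyn⟩, hD _ u θ hun hxu hθ0 hθr rfl, ?_⟩
    funext i
    simp only [T]
    rw [hsu, inner_add_right, hVj, inner_smul_right, ← hb, b.inner_eq_ite,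
      if_neg (Fin.succ_ne_zero i), mul_zero, zero_add]
  calc ENNReal.ofReal ((r / d) ^ d)
      = volume (Metric.ball (0 : Fin d → ℝ) (r / (2 * d))) := by
        rw [Real.volume_pi_ball _ (by positivity), Fintype.card_fin]
        congr 2
        field_simp
    _ ≤ volume (T '' D) := measure_mono hsub
    _ = μH[d] (T '' D) := by
        have h := hausdorffMeasure_pi_real (ι := Fin d)
        rw [Fintype.card_fin] at h
        rw [h]
    _ ≤ sphereMeasure d D := by
        simpa [sphereMeasure] using hT.hausdorffMeasure_image_le (d := (d : ℝ)) (by positivity) D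

/-! ### The Nikolskii inequality -/

/-- `‖f‖_q ≤ m^{1-p/q} ‖f‖_p^{p/q}` if `|f| ≤ m`. For `q = ∞` the junk value `∞.toReal = 0` makes `p / q`
equal to `0`, as it should be. -/
lemma eLpNorm_le_interp {α : Type*} [MeasurableSpace α] (μ : Measure α) (f : α → ℝ) (m : ℝ≥0∞)
    (hm : ∀ x, ‖f x‖ₑ ≤ m) (hmt : m ≠ ∞) {p q : ℝ≥0∞} (hp : 1 ≤ p) (hpq : p < q) :
    eLpNorm f q μ ≤ m ^ (1 - p.toReal / q.toReal) * eLpNorm f p μ ^ (p.toReal / q.toReal) := by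
  have hp0 : p ≠ 0 := (zero_lt_one.trans_le hp).ne'
  have hpt : p ≠ ∞ := hpq.ne_top
  have hpr : 0 < p.toReal := ENNReal.toReal_pos hp0 hpt
  rcases eq_or_ne q ∞ with rfl | hqt
  · simp only [ENNReal.toReal_top, div_zero, sub_zero, ENNReal.rpow_one, ENNReal.rpow_zero, mul_one,
      eLpNorm_exponent_top]
    exact essSup_le_of_ae_le _ (Eventually.of_forall hm)
  have hpq' : p.toReal < q.toReal := (ENNReal.toReal_lt_toReal hpt hqt).2 hpq
  have hqr : 0 < q.toReal := hpr.trans hpq'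
  have hq0 : q ≠ 0 := (ENNReal.toReal_pos_iff.1 hqr).1.ne'
  rw [eLpNorm_eq_lintegral_rpow_enorm_toReal hq0 hqt, eLpNorm_eq_lintegral_rpow_enorm_toReal hp0 hpt,
    ← ENNReal.rpow_mul]
  have h1 : ∫⁻ x, ‖f x‖ₑ ^ q.toReal ∂μ ≤
      m ^ (q.toReal - p.toReal) * ∫⁻ x, ‖f x‖ₑ ^ p.toReal ∂μ := by
    rw [← lintegral_const_mul' _ _ (ENNReal.rpow_ne_top_of_nonneg (by linarith) hmt)]
    refine lintegral_mono fun x => ?_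
    calc ‖f x‖ₑ ^ q.toReal = ‖f x‖ₑ ^ (q.toReal - p.toReal) * ‖f x‖ₑ ^ p.toReal := by
          rw [← ENNReal.rpow_add_of_nonneg _ _ (by linarith) hpr.le, sub_add_cancel]
      _ ≤ _ := by
          gcongr
          exact hm x
  calc _ ≤ (m ^ (q.toReal - p.toReal) * ∫⁻ x, ‖f x‖ₑ ^ p.toReal ∂μ) ^ (1 / q.toReal) := by
        gcongr
    _ = _ := by
        rw [ENNReal.mul_rpow_of_nonneg _ _ (by positivity), ← ENNReal.rpow_mul]
        congr 2 <;> field_simp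

/-- The case `q = ∞`: a polynomial is at least half its maximum on a cap of radius `1 / (6 n)`
around an extremal point. -/
lemma exists_bound_le_eLpNorm {d n : ℕ} (hd : 1 ≤ d) (hn : 1 ≤ n) {P : UnitSphere d → ℝ}
    (hP : P ∈ sphPoly d n) {p : ℝ≥0∞} (hp : 1 ≤ p) (hpt : p ≠ ∞) :
    ∃ M : ℝ, (∀ x, |P x| ≤ M) ∧
      ENNReal.ofReal M ≤ ENNReal.ofReal (2 * (6 * d) ^ ((d : ℝ) / p.toReal) *
        (n : ℝ) ^ ((d : ℝ) / p.toReal)) * eLpNorm P p (sphereMeasure d) := by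
  obtain ⟨F, hF, hPF⟩ := hP
  have hn0 : (1 : ℝ) ≤ n := by exact_mod_cast hn
  have hd0 : (1 : ℝ) ≤ d := by exact_mod_cast hd
  have hp0 : p ≠ 0 := (zero_lt_one.trans_le hp).ne'
  have hpr : 0 < p.toReal := ENNReal.toReal_pos hp0 hpt
  have hcont : Continuous P := by
    have : P = fun x : UnitSphere d =>
        MvPolynomial.eval (fun i => (x : EuclideanSpace ℝ (Fin (d + 1))) i) F := funext hPF
    rw [this]
    exact F.continuous_eval.comp (by fun_prop)
  have : Nonempty (UnitSphere d) :=
    (NormedSpace.sphere_nonempty.2 zero_le_one).to_subtype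
  obtain ⟨x₀, -, hx₀⟩ := isCompact_univ.exists_isMaxOn Set.univ_nonempty hcont.abs.continuousOn
  have hmax : ∀ x, |P x| ≤ |P x₀| := fun x => hx₀ (Set.mem_univ x)
  set M := |P x₀| with hMdef
  have hM0 : 0 ≤ M := abs_nonneg _
  refine ⟨M, hmax, ?_⟩
  set D : Set (UnitSphere d) := {y | M / 2 ≤ |P y|} with hDdef
  have hmeas : ENNReal.ofReal ((1 / (6 * n) / d) ^ d) ≤ sphereMeasure d D := by
    refine cap_measure_ge hd x₀ (by positivity) ?_ D ?_ ?_
    · rw [div_le_one (by positivity)]; linarith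
    · show M / 2 ≤ |P x₀|
      linarith
    · intro y u θ hu hxu hθ hθr hy
      have hcirc : ∀ t : ℝ, ‖Real.cos t • (x₀ : EuclideanSpace ℝ (Fin (d + 1))) + Real.sin t • u‖
          = 1 := by
        intro t
        refine (pow_eq_one_iff_of_nonneg (norm_nonneg _) two_ne_zero).1 ?_
        rw [norm_add_sq_real, norm_smul, norm_smul, inner_smul_left, inner_smul_right, hxu, hu]
        simp
      have hB := abs_eval_sub_le hn F hF (fun i => (x₀ : EuclideanSpace ℝ (Fin (d + 1))) i)
        (fun i => u i) (M := M) (fun t => by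
          have h := hmax ⟨_, mem_sphere_zero_iff_norm.2 (hcirc t)⟩
          rw [hPF] at h
          simpa using h) hθ
      rw [← hPF x₀] at hB
      have hPy : MvPolynomial.eval (fun i => Real.cos θ * (x₀ : EuclideanSpace ℝ (Fin (d + 1))) i
          + Real.sin θ * u i) F = P y := by
        rw [hPF y, hy]; simp
      rw [hPy] at hB
      have h3 : 3 * n * M * θ ≤ M / 2 := by
        calc 3 * n * M * θ ≤ 3 * n * M * (1 / (6 * n)) := by gcongr
          _ = M / 2 := by field_simp; ring
      have h4 : M - |P y| ≤ |P y - P x₀| := by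
        rw [abs_sub_comm]; exact abs_sub_abs_le_abs_sub _ _
      show M / 2 ≤ |P y|
      linarith
  -- Chebyshev's inequality on the cap.
  have hch := pow_mul_meas_ge_le_eLpNorm (sphereMeasure d) hp0 hpt
    (hcont.aestronglyMeasurable) (f := P) (ENNReal.ofReal (M / 2) ^ p.toReal)
  have hset : D ⊆ {x | ENNReal.ofReal (M / 2) ^ p.toReal ≤ ‖P x‖ₑ ^ p.toReal} := by
    intro y hy
    refine ENNReal.rpow_le_rpow ?_ hpr.le
    rw [Real.enorm_eq_ofReal_abs]
    exact ENNReal.ofReal_le_ofReal hy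
  set A := eLpNorm P p (sphereMeasure d)
  set k : ℝ := (6 * d) ^ ((d : ℝ) / p.toReal) * (n : ℝ) ^ ((d : ℝ) / p.toReal) with hk
  have hk0 : 0 < k := by positivity
  have hpow : ((1 / (6 * n) / d : ℝ) ^ d) ^ (1 / p.toReal) = k⁻¹ := by
    rw [hk, ← Real.mul_rpow (by positivity) (by positivity), ← Real.inv_rpow (by positivity),
      ← Real.rpow_natCast, ← Real.rpow_mul (by positivity), mul_one_div]
    congr 1
    field_simp
  have h5 : ENNReal.ofReal (M / 2) * ENNReal.ofReal k⁻¹ ≤ A := by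
    calc _ = (ENNReal.ofReal (M / 2) ^ p.toReal * ENNReal.ofReal ((1 / (6 * n) / d) ^ d))
          ^ (1 / p.toReal) := by
          rw [ENNReal.mul_rpow_of_nonneg _ _ (by positivity), ← ENNReal.rpow_mul,
            mul_one_div_cancel hpr.ne', ENNReal.rpow_one,
            ENNReal.ofReal_rpow_of_nonneg (by positivity) (by positivity), hpow]
      _ ≤ _ := by
          refine (ENNReal.rpow_le_rpow ?_ (by positivity)).trans hch
          exact mul_le_mul_right (hmeas.trans (measure_mono hset)) _
  calc ENNReal.ofReal M = ENNReal.ofReal (2 * k) * (ENNReal.ofReal (M / 2) * ENNReal.ofReal k⁻¹) := by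
        rw [← ENNReal.ofReal_mul (by positivity), ← ENNReal.ofReal_mul (by positivity)]
        congr 1
        field_simp
    _ ≤ ENNReal.ofReal (2 * k) * A := mul_le_mul_right h5 _
    _ = _ := by rw [hk]; ring_nf

/-- Nikolskiĭ inequality on the sphere: for `1 ≤ p < q ≤ ∞` and a spherical polynomial `P`
of degree at most `n`, `‖P‖_{L_q(S^d)} ≤ C̃₁ n^{d/p - d/q} ‖P‖_{L_p(S^d)}` with `C̃₁`
depending only on `d, p, q`.  (For `q = ∞` the convention `d/q = 0` applies.) -/
theorem stmt_18 (d : ℕ) (hd : 2 ≤ d) (p q : ℝ≥0∞) (hp : 1 ≤ p) (hpq : p < q) :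
    ∃ C > (0 : ℝ), ∀ (n : ℕ), 1 ≤ n → ∀ P ∈ sphPoly d n,
      eLpNorm P q (sphereMeasure d) ≤
        ENNReal.ofReal (C * (n : ℝ) ^ ((d : ℝ) / p.toReal - (d : ℝ) / q.toReal)) *
          eLpNorm P p (sphereMeasure d) := by
  have hpt : p ≠ ∞ := hpq.ne_top
  have hpr : 0 < p.toReal := ENNReal.toReal_pos (zero_lt_one.trans_le hp).ne' hpt
  have hd0 : (0 : ℝ) < d := by exact_mod_cast (by omega : 0 < d)
  set α : ℝ := p.toReal / q.toReal with hα
  have hα0 : 0 ≤ α := by positivity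
  have hα1 : α ≤ 1 := by
    rcases eq_or_ne q ∞ with rfl | hqt
    · simp [hα]
    · exact div_le_one_of_le₀ (ENNReal.toReal_mono hqt hpq.le) ENNReal.toReal_nonneg
  set K : ℝ := 2 * (6 * d) ^ ((d : ℝ) / p.toReal) with hK
  have hK0 : 0 < K := by positivity
  refine ⟨K ^ (1 - α), by positivity, fun n hn P hP => ?_⟩
  have hn0 : (0 : ℝ) < n := by exact_mod_cast hn
  obtain ⟨M, hM, hMA⟩ := exists_bound_le_eLpNorm (by omega) hn hP hp hpt
  set A := eLpNorm P p (sphereMeasure d)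
  have hexp : K ^ (1 - α) * (n : ℝ) ^ ((d : ℝ) / p.toReal - (d : ℝ) / q.toReal) =
      (K * (n : ℝ) ^ ((d : ℝ) / p.toReal)) ^ (1 - α) := by
    rw [Real.mul_rpow hK0.le (by positivity), ← Real.rpow_mul hn0.le]
    congr 2
    rw [hα]
    -- This form of the identity stays true for `q.toReal = 0`.
    have : (d : ℝ) / q.toReal = d / p.toReal * (p.toReal / q.toReal) := by
      rw [div_mul_div_cancel₀ hpr.ne']
    rw [this]; ring
  calc eLpNorm P q (sphereMeasure d)
      ≤ ENNReal.ofReal M ^ (1 - α) * A ^ α :=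
        eLpNorm_le_interp _ P _ (fun x => by
          rw [Real.enorm_eq_ofReal_abs]
          exact ENNReal.ofReal_le_ofReal (hM x)) ENNReal.ofReal_ne_top hp hpq
    _ ≤ (ENNReal.ofReal (K * (n : ℝ) ^ ((d : ℝ) / p.toReal)) * A) ^ (1 - α) * A ^ α := by
        have : 0 ≤ 1 - α := by linarith
        gcongr
    _ = ENNReal.ofReal (K * (n : ℝ) ^ ((d : ℝ) / p.toReal)) ^ (1 - α) * A := by
        rw [ENNReal.mul_rpow_of_nonneg _ _ (by linarith), mul_assoc,
          ← ENNReal.rpow_add_of_nonneg _ _ (by linarith) hα0, sub_add_cancel, ENNReal.rpow_one]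
    _ = _ := by
        rw [hexp, ENNReal.ofReal_rpow_of_pos (by positivity)]
end
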